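/- arXiv:1406.4932 — 2 statements merged into one kernel-verified Lean document; each statement's English description precedes it below -/
import Mathlib

section
/- Let ν be a Borel probability measure on ℝ, let Ω = ℝ^{ℤᵈ} be the space of functions ℤᵈ → ℝ (d ≥ 1) with the infinite product measure μ = ⊗_{x∈ℤᵈ} ν, and for x ∈ ℤᵈ define σ_x : Ω → Ω by (σ_x ω)(y) = ω(y − x). Then each σ_x is μ-measure-preserving, the composition operators S_x f = f ∘ σ_x are unitary on L²(Ω, μ), and there exists a family (U_k)_{k∈ℝᵈ} of unitary operators on L²(Ω, μ) such that: U_0 = Id; U_{k+k'} = U_k ∘ U_{k'} for all k, k' ∈ ℝᵈ; for each f ∈ L²(Ω, μ) the map k ↦ U_k f is continuous; U_k 𝟙 = 𝟙 where 𝟙 is the constant function 1; and U_k (S_x f) = e^{i k·x} S_x (U_k f) for every x ∈ ℤᵈ, every k ∈ ℝᵈ, and every f ∈ L²(Ω, μ) with ∫_Ω f dμ = 0. -/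
open MeasureTheory Filter Topology

section abstractpart
variable {E : Type*} [NormedAddCommGroup E] [InnerProductSpace ℂ E] [CompleteSpace E]

theorem aux_dense {ι κ : Type*} (e : ι → κ → E)
    (htot : ∀ f : E, (∀ i a, inner ℂ (e i a) f = 0) → f = 0) :
    (Submodule.span ℂ (Set.range fun p : ι × κ => e p.1 p.2)).topologicalClosure = ⊤ := by
  rw [Submodule.topologicalClosure_eq_top_iff, Submodule.eq_bot_iff]
  intro f hf
  refine htot f fun i a => ?_
  exact (Submodule.mem_orthogonal _ f).1 hf _ (Submodule.subset_span ⟨(i, a), rfl⟩)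

theorem aux_ext {ι κ : Type*} (e : ι → κ → E)
    (htot : ∀ f : E, (∀ i a, inner ℂ (e i a) f = 0) → f = 0)
    (T T' : E →L[ℂ] E) (h : ∀ i a, T (e i a) = T' (e i a)) : T = T' := by
  have hd := aux_dense e htot
  refine ContinuousLinearMap.ext_on (s := Set.range fun p : ι × κ => e p.1 p.2) ?_ ?_
  · rw [Submodule.dense_iff_topologicalClosure_eq_top]; exact hd
  · rintro _ ⟨p, rfl⟩; exact h _ _

theorem aux_diag {ι κ : Type*} (e : ι → κ → E)
    (horth : ∀ i j, i ≠ j → ∀ a b, inner ℂ (e i a) (e j b) = 0)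
    (htot : ∀ f : E, (∀ i a, inner ℂ (e i a) f = 0) → f = 0)
    (c : ι → ℂ) (hc : ∀ i, ‖c i‖ = 1) :
    ∃ T : E ≃ₗᵢ[ℂ] E, ∀ i a, T (e i a) = c i • e i a := by
  classical
  let V : ι → Submodule ℂ E := fun i => (Submodule.span ℂ (Set.range (e i))).topologicalClosure
  have hcompl : ∀ i, CompleteSpace (V i) := fun i =>
    (Submodule.isClosed_topologicalClosure _).completeSpace_coe
  have hmem : ∀ i a, e i a ∈ V i := fun i a =>
    Submodule.le_topologicalClosure _ (Submodule.subset_span ⟨a, rfl⟩)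
  have hV : ∀ i j, i ≠ j → V i ⟂ V j := by
    intro i j hij
    have h1 : Submodule.span ℂ (Set.range (e i)) ⟂ Submodule.span ℂ (Set.range (e j)) := by
      rw [Submodule.isOrtho_span]
      rintro _ ⟨a, rfl⟩ _ ⟨b, rfl⟩
      exact horth i j hij a b
    rw [Submodule.isOrtho_iff_le] at h1 ⊢
    simp only [V]
    rw [Submodule.orthogonal_closure]
    exact Submodule.topologicalClosure_minimal _ h1 (Submodule.isClosed_orthogonal _)
  let W : (c : ι → ℂ) → (hc : ∀ i, ‖c i‖ = 1) → ∀ i, V i →ₗᵢ[ℂ] E := fun c hc i =>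
    { toLinearMap := c i • (V i).subtype
      norm_map' := by
        intro x
        simp [norm_smul, hc i] }
  have hWap : ∀ c hc i (x : V i), W c hc i x = c i • (x : E) := fun _ _ _ _ => rfl
  have hW : ∀ c hc, IsHilbertSum ℂ (fun i => V i) (W c hc) := by
    intro c hc
    refine IsHilbertSum.mk ?_ ?_
    · intro i j hij v w
      rw [hWap c hc, hWap c hc, inner_smul_left, inner_smul_right,
        Submodule.isOrtho_iff_inner_eq.1 (hV i j hij) v v.2 w w.2]
      simp
    · rw [← aux_dense e htot]
      apply Submodule.topologicalClosure_mono
      rw [Submodule.span_le]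
      rintro _ ⟨⟨i, a⟩, rfl⟩
      refine Submodule.mem_iSup_of_mem i ?_
      have hci : c i ≠ 0 := by
        intro h0
        have := hc i
        simp [h0] at this
      refine ⟨⟨(c i)⁻¹ • e i a, (V i).smul_mem _ (hmem i a)⟩, ?_⟩
      change c i • ((c i)⁻¹ • e i a) = e i a
      rw [smul_smul, mul_inv_cancel₀ hci, one_smul]
  have h1 : ∀ i : ι, ‖(fun _ => 1 : ι → ℂ) i‖ = 1 := by simp
  refine ⟨(hW _ h1).linearIsometryEquiv.trans (hW c hc).linearIsometryEquiv.symm, ?_⟩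
  intro i a
  have h2 : e i a = (hW _ h1).linearIsometryEquiv.symm (lp.single 2 i ⟨e i a, hmem i a⟩) := by
    rw [IsHilbertSum.linearIsometryEquiv_symm_apply_single]
    exact (one_smul ℂ (e i a)).symm
  rw [LinearIsometryEquiv.trans_apply]
  conv_lhs => rw [h2]
  rw [LinearIsometryEquiv.apply_symm_apply, IsHilbertSum.linearIsometryEquiv_symm_apply_single,
    hWap c hc]

theorem aux_cont {ι κ X : Type*} [TopologicalSpace X] (e : ι → κ → E)
    (htot : ∀ f : E, (∀ i a, inner ℂ (e i a) f = 0) → f = 0)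
    (U : X → E ≃ₗᵢ[ℂ] E) (h : ∀ i a, Continuous fun k => U k (e i a)) (f : E) :
    Continuous fun k => U k f := by
  let K : Submodule ℂ E :=
    { carrier := {f | Continuous fun k => U k f}
      add_mem' := by
        intro a b ha hb
        simp only [Set.mem_ofPred_eq, map_add] at *
        exact ha.add hb
      zero_mem' := by simp [continuous_const]
      smul_mem' := by
        intro c a ha
        simp only [Set.mem_ofPred_eq, map_smul] at *
        exact ha.const_smul c }
  have hK : IsClosed (K : Set E) := by
    rw [← closure_subset_iff_isClosed]
    intro g hg
    rw [Metric.mem_closure_iff] at hg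
    change Continuous fun k => U k g
    refine continuous_of_uniform_approx_of_continuous ?_
    intro u hu
    obtain ⟨ε, hε, hεu⟩ := Metric.mem_uniformity_dist.1 hu
    obtain ⟨b, hb, hgb⟩ := hg ε hε
    refine ⟨fun k => U k b, hb, fun k => hεu ?_⟩
    rwa [LinearIsometryEquiv.dist_map]
  have : (⊤ : Submodule ℂ E) ≤ K := by
    rw [← aux_dense e htot]
    refine Submodule.topologicalClosure_minimal _ ?_ hK
    rw [Submodule.span_le]
    rintro _ ⟨⟨i, a⟩, rfl⟩
    exact h i a
  exact this (Submodule.mem_top : f ∈ ⊤)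
end abstractpart

section measurepart
open ProbabilityTheory
variable {I : Type*} (ν : Measure ℝ) [IsProbabilityMeasure ν]

/-- centred indicator -/
noncomputable def auxg (B : Set ℝ) (r : ℝ) : ℂ :=
  (B.indicator (fun _ => (1 : ℝ)) r - ν.real B : ℝ)

/-- product of centred indicators -/
noncomputable def auxgen (A : Finset I) (B : I → {s : Set ℝ // MeasurableSet s}) (ω : I → ℝ) : ℂ :=
  ∏ x ∈ A, auxg ν (B x).1 (ω x)

theorem auxg_meas {B : Set ℝ} (hB : MeasurableSet B) : Measurable (auxg ν B) := by
  unfold auxg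
  exact Complex.measurable_ofReal.comp ((measurable_const.indicator hB).sub_const _)

theorem auxg_conj (B : Set ℝ) (r : ℝ) : (starRingEnd ℂ) (auxg ν B r) = auxg ν B r := by
  unfold auxg
  exact Complex.conj_ofReal _

theorem auxg_bound (B : Set ℝ) (r : ℝ) : ‖auxg ν B r‖ ≤ 1 := by
  unfold auxg
  rw [Complex.norm_real, Real.norm_eq_abs, abs_le]
  have h0 : 0 ≤ ν.real B := measureReal_nonneg
  have h1 : ν.real B ≤ 1 := measureReal_le_one
  by_cases h : r ∈ B
  · rw [Set.indicator_of_mem h]; constructor <;> linarith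
  · rw [Set.indicator_of_notMem h]; constructor <;> linarith

theorem auxg_int {B : Set ℝ} (hB : MeasurableSet B) : ∫ r, auxg ν B r ∂ν = 0 := by
  unfold auxg
  rw [integral_complex_ofReal, integral_sub ((integrable_const _).indicator hB) (integrable_const _),
    integral_indicator_const _ hB]
  simp

theorem auxgen_meas (A : Finset I) (B : I → {s : Set ℝ // MeasurableSet s}) :
    Measurable (auxgen ν A B) := by
  unfold auxgen
  exact Finset.measurable_fun_prod _ fun x _ => (auxg_meas ν (B x).2).comp (measurable_pi_apply x)

theorem auxgen_bound (A : Finset I) (B : I → {s : Set ℝ // MeasurableSet s}) (ω : I → ℝ) :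
    ‖auxgen ν A B ω‖ ≤ 1 := by
  unfold auxgen
  rw [norm_prod]
  exact Finset.prod_le_one (fun _ _ => norm_nonneg _) fun _ _ => auxg_bound _ _ _

theorem auxgen_conj (A : Finset I) (B : I → {s : Set ℝ // MeasurableSet s}) (ω : I → ℝ) :
    (starRingEnd ℂ) (auxgen ν A B ω) = auxgen ν A B ω := by
  unfold auxgen
  rw [map_prod]
  exact Finset.prod_congr rfl fun _ _ => auxg_conj _ _ _

theorem auxgen_memLp (μ : Measure (I → ℝ)) [IsProbabilityMeasure μ]
    (A : Finset I) (B : I → {s : Set ℝ // MeasurableSet s}) :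
    MemLp (auxgen ν A B) 2 μ :=
  MemLp.of_bound (auxgen_meas ν A B).aestronglyMeasurable 1
    (Filter.Eventually.of_forall (auxgen_bound ν A B))

theorem aux_inner (μ : Measure (I → ℝ)) [IsProbabilityMeasure μ]
    (A : Finset I) (B : I → {s : Set ℝ // MeasurableSet s}) (f : Lp ℂ 2 μ) :
    inner ℂ ((auxgen_memLp ν μ A B).toLp _) f = ∫ ω, auxgen ν A B ω * f ω ∂μ := by
  rw [L2.inner_def]
  refine integral_congr_ae ?_
  filter_upwards [(auxgen_memLp ν μ A B).coeFn_toLp] with ω hω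
  rw [hω, RCLike.inner_apply, auxgen_conj, mul_comm]

theorem aux_intprod (t : Finset I) (h : I → ℝ → ℂ) (hh : ∀ i, Measurable (h i)) :
    ∫ ω, ∏ x ∈ t, h x (ω x) ∂(Measure.infinitePi fun _ : I => ν) = ∏ x ∈ t, ∫ r, h x r ∂ν := by
  have hind : iIndepFun (fun (i : I) (ω : I → ℝ) => ω i) (Measure.infinitePi fun _ : I => ν) :=
    iIndepFun_infinitePi (X := fun _ r => r) (fun _ => measurable_id)
  have hind' : iIndepFun (fun (i : t) (ω : I → ℝ) => ω i) (Measure.infinitePi fun _ : I => ν) :=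
    hind.precomp Subtype.val_injective
  have key := hind'.integral_fun_prod_comp (f := fun i : t => h i)
    (fun i => (measurable_pi_apply _).aemeasurable) (fun i => (hh i).aestronglyMeasurable)
  have e1 : ∀ ω : I → ℝ, ∏ x ∈ t, h x (ω x) = ∏ i : t, h i (ω i) := fun ω =>
    (Finset.prod_coe_sort t (fun x => h x (ω x))).symm
  simp_rw [e1]
  rw [key, ← Finset.prod_coe_sort t]
  refine Finset.prod_congr rfl fun i _ => ?_
  have := Measure.infinitePi_map_eval (fun _ : I => ν) (i : I)
  conv_rhs => rw [← this]
  rw [integral_map (measurable_pi_apply _).aemeasurable (hh i).aestronglyMeasurable]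

theorem aux_orth (A A' : Finset I) (hA : A ≠ A') (B B' : I → {s : Set ℝ // MeasurableSet s}) :
    ∫ ω, auxgen ν A B ω * auxgen ν A' B' ω ∂(Measure.infinitePi fun _ : I => ν) = 0 := by
  classical
  let h : I → ℝ → ℂ := fun x r => (if x ∈ A then auxg ν (B x).1 r else 1) *
    (if x ∈ A' then auxg ν (B' x).1 r else 1)
  have hh : ∀ i, Measurable (h i) := by
    intro i
    refine Measurable.mul ?_ ?_
    · split_ifs
      · exact auxg_meas ν (B i).2
      · exact measurable_const
    · split_ifs
      · exact auxg_meas ν (B' i).2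
      · exact measurable_const
  have e1 : ∀ ω : I → ℝ, auxgen ν A B ω * auxgen ν A' B' ω = ∏ x ∈ A ∪ A', h x (ω x) := by
    intro ω
    simp only [h, Finset.prod_mul_distrib, auxgen]
    congr 1
    · rw [Finset.prod_ite_mem, Finset.inter_eq_right.2 Finset.subset_union_left]
    · rw [Finset.prod_ite_mem, Finset.inter_eq_right.2 Finset.subset_union_right]
  simp_rw [e1]
  rw [aux_intprod ν _ h hh]
  have : ∃ x, (x ∈ A ∧ x ∉ A') ∨ (x ∉ A ∧ x ∈ A') := by
    by_contra hcon
    push Not at hcon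
    apply hA
    ext x
    have := hcon x
    tauto
  obtain ⟨x, hx⟩ := this
  refine Finset.prod_eq_zero (i := x) ?_ ?_
  · rw [Finset.mem_union]; tauto
  · rcases hx with ⟨h1, h2⟩ | ⟨h1, h2⟩
    · simp only [h, h1, h2, if_true, if_false, mul_one]
      exact auxg_int ν (B x).2
    · simp only [h, h1, h2, if_true, if_false, one_mul]
      exact auxg_int ν (B' x).2

theorem aux_tot (μ : Measure (I → ℝ)) [IsProbabilityMeasure μ] (f : Lp ℂ 2 μ)
    (hf : ∀ (A : Finset I) (B : I → {s : Set ℝ // MeasurableSet s}),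
      ∫ ω, auxgen ν A B ω * f ω ∂μ = 0) : f = 0 := by
  classical
  have hfi : Integrable f μ := (Lp.memLp f).integrable (by norm_num)
  have hgi : ∀ (A : Finset I) (B : I → {s : Set ℝ // MeasurableSet s}),
      Integrable (fun ω => auxgen ν A B ω * f ω) μ := fun A B =>
    hfi.bdd_mul (auxgen_meas ν A B).aestronglyMeasurable
      (Filter.Eventually.of_forall (auxgen_bound ν A B))
  have hcyl : ∀ (t : Finset I) (B : I → {s : Set ℝ // MeasurableSet s}),
      ∫ ω in (t : Set I).pi (fun i => (B i).1), f ω ∂μ = 0 := by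
    intro t B
    have hm : MeasurableSet ((t : Set I).pi (fun i => (B i).1)) :=
      MeasurableSet.pi t.countable_toSet fun i _ => (B i).2
    rw [← integral_indicator hm]
    have e1 : ∀ ω : I → ℝ, ((t : Set I).pi (fun i => (B i).1)).indicator f ω =
        ∑ s ∈ t.powerset, (∏ x ∈ t \ s, (ν.real (B x).1 : ℂ)) * (auxgen ν s B ω * f ω) := by
      intro ω
      have e2 : ∏ x ∈ t, (((B x).1.indicator (fun _ => (1 : ℝ)) (ω x) : ℝ) : ℂ) =
          ∑ s ∈ t.powerset, auxgen ν s B ω * ∏ x ∈ t \ s, (ν.real (B x).1 : ℂ) := by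
        unfold auxgen
        rw [← Finset.prod_add]
        refine Finset.prod_congr rfl fun x _ => ?_
        simp [auxg]
      have e3 : ((t : Set I).pi (fun i => (B i).1)).indicator f ω =
          (∏ x ∈ t, (((B x).1.indicator (fun _ => (1 : ℝ)) (ω x) : ℝ) : ℂ)) * f ω := by
        by_cases hω : ω ∈ (t : Set I).pi (fun i => (B i).1)
        · rw [Set.indicator_of_mem hω, Finset.prod_eq_one, one_mul]
          intro x hx
          rw [Set.indicator_of_mem (hω x hx)]; simp
        · rw [Set.indicator_of_notMem hω]
          simp only [Set.mem_pi, not_forall] at hω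
          obtain ⟨x, hx, hxB⟩ := hω
          rw [Finset.prod_eq_zero (i := x) hx, zero_mul]
          rw [Set.indicator_of_notMem hxB]; simp
      rw [e3, e2, Finset.sum_mul]
      refine Finset.sum_congr rfl fun s _ => by ring
    simp_rw [e1]
    rw [integral_finsetSum _ fun s _ => (hgi s B).const_mul _]
    refine Finset.sum_eq_zero fun s _ => ?_
    rw [integral_const_mul, hf, mul_zero]
  have hall : ∀ s : Set (I → ℝ), MeasurableSet s → ∫ ω in s, f ω ∂μ = 0 := by
    intro s hs
    refine MeasurableSpace.induction_on_inter
      (C := fun s _ => ∫ ω in s, f ω ∂μ = 0) generateFrom_squareCylinders.symm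
      (isPiSystem_squareCylinders (fun _ ↦ MeasurableSpace.isPiSystem_measurableSet) (by simp))
      (by simp) ?_ ?_ ?_ s hs
    · rintro _ ⟨t, B, hB, rfl⟩
      exact hcyl t fun i => ⟨B i, hB i (Set.mem_univ i)⟩
    · intro t ht h
      have h0 := hcyl ∅ fun _ => ⟨Set.univ, MeasurableSet.univ⟩
      simp only [Finset.coe_empty, Set.empty_pi, setIntegral_univ] at h0
      have := integral_add_compl ht hfi
      rw [h, h0, zero_add] at this
      exact this
    · intro g hg hgm h
      rw [integral_iUnion hgm hg hfi.integrableOn]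
      simp [h]
  rw [Lp.eq_zero_iff_ae_eq_zero]
  exact hfi.ae_eq_zero_of_forall_setIntegral_eq_zero fun s hs _ => hall s hs

end measurepart

section phasepart

/-- centre of mass pairing -/
noncomputable def auxpos {d : ℕ} (k : Fin d → ℝ) (A : Finset (Fin d → ℤ)) : ℝ :=
  (∑ a ∈ A, ∑ j, k j * (a j : ℝ)) / (A.card : ℝ)

/-- phases -/
noncomputable def auxphase {d : ℕ} (k : Fin d → ℝ) (A : Finset (Fin d → ℤ)) : ℂ :=
  Complex.exp ((-(auxpos k A) : ℝ) * Complex.I)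

theorem auxphase_norm {d : ℕ} (k : Fin d → ℝ) (A : Finset (Fin d → ℤ)) : ‖auxphase k A‖ = 1 :=
  Complex.norm_exp_ofReal_mul_I _

theorem auxphase_add {d : ℕ} (k k' : Fin d → ℝ) (A : Finset (Fin d → ℤ)) :
    auxphase (k + k') A = auxphase k A * auxphase k' A := by
  have : auxpos (k + k') A = auxpos k A + auxpos k' A := by
    unfold auxpos
    rw [← add_div, ← Finset.sum_add_distrib]
    congr 1
    refine Finset.sum_congr rfl fun a _ => ?_
    rw [← Finset.sum_add_distrib]
    refine Finset.sum_congr rfl fun j _ => ?_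
    simp only [Pi.add_apply]; ring
  unfold auxphase
  rw [← Complex.exp_add, this]
  congr 1
  push_cast
  ring

theorem auxphase_zero {d : ℕ} (A : Finset (Fin d → ℤ)) : auxphase 0 A = 1 := by
  simp [auxphase, auxpos]

theorem auxphase_empty {d : ℕ} (k : Fin d → ℝ) : auxphase k ∅ = 1 := by
  simp [auxphase, auxpos]

theorem auxphase_cont {d : ℕ} (A : Finset (Fin d → ℤ)) :
    Continuous fun k : Fin d → ℝ => auxphase k A := by
  unfold auxphase auxpos
  fun_prop

theorem auxphase_shift {d : ℕ} (k : Fin d → ℝ) (x : Fin d → ℤ) (A : Finset (Fin d → ℤ))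
    (hA : A ≠ ∅) :
    auxphase k (A.map (Equiv.subRight x).toEmbedding) =
      Complex.exp (Complex.I * (∑ j, k j * (x j : ℝ) : ℝ)) * auxphase k A := by
  have hc : (A.card : ℝ) ≠ 0 := by
    simpa using hA
  have : auxpos k (A.map (Equiv.subRight x).toEmbedding) =
      auxpos k A - ∑ j, k j * (x j : ℝ) := by
    unfold auxpos
    rw [Finset.sum_map, Finset.card_map, eq_sub_iff_add_eq, div_add' _ _ _ hc]
    congr 1
    rw [mul_comm, ← nsmul_eq_mul, ← Finset.sum_const, ← Finset.sum_add_distrib]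
    refine Finset.sum_congr rfl fun a _ => ?_
    rw [← Finset.sum_add_distrib]
    refine Finset.sum_congr rfl fun j _ => ?_
    simp only [Equiv.coe_toEmbedding, Equiv.subRight_apply, Pi.sub_apply]
    push_cast
    ring
  unfold auxphase
  rw [← Complex.exp_add, this]
  congr 1
  push_cast
  ring

end phasepart

/-- Equivalence of twisted shifts on product spaces. Let `ν` be a Borel
probability measure on `ℝ`, `Ω = ℝ^{ℤᵈ}` with the product measure `μ = ⊗_x ν` (characterized
by its values on measurable cylinder sets), and `σ_x ω (y) = ω (y − x)` the shifts.  Then each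
`σ_x` is `μ`-measure-preserving, the composition operators `S_x f = f ∘ σ_x` are unitary on
`L²(Ω, μ)`, and there is a strongly continuous `d`-parameter unitary group `k ↦ U_k` on
`L²(Ω, μ)` with `U_k 𝟙 = 𝟙` and `U_k S_x f = e^{ik·x} S_x U_k f` whenever `∫ f dμ = 0`. -/
theorem stmt_4 (d : ℕ) (hd : 1 ≤ d)
    (ν : Measure ℝ) [IsProbabilityMeasure ν]
    (μ : Measure ((Fin d → ℤ) → ℝ)) [IsProbabilityMeasure μ]
    (hμ : ∀ (t : Finset (Fin d → ℤ)) (B : (Fin d → ℤ) → Set ℝ),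
      (∀ i ∈ t, MeasurableSet (B i)) →
        μ {ω | ∀ i ∈ t, ω i ∈ B i} = ∏ i ∈ t, ν (B i))
    (σ : (Fin d → ℤ) → ((Fin d → ℤ) → ℝ) → ((Fin d → ℤ) → ℝ))
    (hσ : ∀ x ω y, σ x ω y = ω (y - x)) :
    (∀ x, MeasurePreserving (σ x) μ μ) ∧
    ∃ S : (Fin d → ℤ) → (Lp ℂ 2 μ ≃ₗᵢ[ℂ] Lp ℂ 2 μ),
      (∀ (x : Fin d → ℤ) (f : Lp ℂ 2 μ),
          (S x f : ((Fin d → ℤ) → ℝ) → ℂ) =ᵐ[μ] fun ω => f (σ x ω)) ∧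
      ∃ U : (Fin d → ℝ) → (Lp ℂ 2 μ ≃ₗᵢ[ℂ] Lp ℂ 2 μ),
        U 0 = LinearIsometryEquiv.refl ℂ (Lp ℂ 2 μ) ∧
        (∀ (k k' : Fin d → ℝ) (f : Lp ℂ 2 μ), U (k + k') f = U k (U k' f)) ∧
        (∀ f : Lp ℂ 2 μ, Continuous fun k : Fin d → ℝ => U k f) ∧
        (∀ (k : Fin d → ℝ) (one : Lp ℂ 2 μ),
          (one : ((Fin d → ℤ) → ℝ) → ℂ) =ᵐ[μ] (fun _ => 1) → U k one = one) ∧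
        (∀ (k : Fin d → ℝ) (x : Fin d → ℤ) (f : Lp ℂ 2 μ),
          (∫ ω, f ω ∂μ) = 0 →
            U k (S x f) =
              Complex.exp (Complex.I * (∑ j, k j * (x j : ℝ) : ℝ)) • S x (U k f)) := by
  classical
  have hμ' : μ = Measure.infinitePi fun _ : Fin d → ℤ => ν := by
    refine Measure.eq_infinitePi _ ?_
    intro s t ht
    exact hμ s t fun i _ => ht i
  have hmeas : ∀ x, Measurable (σ x) := by
    intro x
    rw [measurable_pi_iff]
    intro y
    simp_rw [hσ]
    exact measurable_pi_apply _
  have hmp : ∀ x, MeasurePreserving (σ x) μ μ := by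
    intro x
    refine ⟨hmeas x, ?_⟩
    have hs : σ x = fun ω y => ω (y - x) := by
      funext ω y; exact hσ x ω y
    rw [hμ', hs]
    exact Measure.map_infinitePi_infinitePi_of_inj (P := fun _ : Fin d → ℤ => ν)
      (f := fun y => y - x) (sub_left_injective)
  refine ⟨hmp, ?_⟩
  have hinv : ∀ x, σ (-x) ∘ σ x = id := by
    intro x; funext ω y; simp [hσ]
  have hinv' : ∀ x, σ x ∘ σ (-x) = id := by
    intro x; funext ω y; simp [hσ]
  let S : (Fin d → ℤ) → (Lp ℂ 2 μ ≃ₗᵢ[ℂ] Lp ℂ 2 μ) := fun x =>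
    LinearIsometryEquiv.ofSurjective (Lp.compMeasurePreservingₗᵢ ℂ (σ x) (hmp x)) (by
      intro g
      refine ⟨Lp.compMeasurePreserving (σ (-x)) (hmp (-x)) g, ?_⟩
      change Lp.compMeasurePreserving (σ x) (hmp x)
        (Lp.compMeasurePreserving (σ (-x)) (hmp (-x)) g) = g
      rw [← Lp.compMeasurePreserving_comp_apply]
      simp_rw [hinv x]
      exact Lp.compMeasurePreserving_id_apply g)
  have hS : ∀ x f, S x f = Lp.compMeasurePreserving (σ x) (hmp x) f := fun _ _ => rfl
  refine ⟨S, ?_, ?_⟩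
  · intro x f
    rw [hS]
    exact Lp.coeFn_compMeasurePreserving f (hmp x)
  let e : Finset (Fin d → ℤ) → ((Fin d → ℤ) → {s : Set ℝ // MeasurableSet s}) → Lp ℂ 2 μ :=
    fun A B => (auxgen_memLp ν μ A B).toLp _
  have he : ∀ A B f, inner ℂ (e A B) f = ∫ ω, auxgen ν A B ω * f ω ∂μ := aux_inner ν μ
  have hee : ∀ A B A' B', inner ℂ (e A B) (e A' B') =
      ∫ ω, auxgen ν A B ω * auxgen ν A' B' ω ∂μ := by
    intro A B A' B'
    rw [he]
    refine integral_congr_ae ?_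
    filter_upwards [(auxgen_memLp ν μ A' B').coeFn_toLp] with ω hω
    rw [hω]
  have horth : ∀ i j, i ≠ j → ∀ a b, inner ℂ (e i a) (e j b) = 0 := by
    intro A A' hA B B'
    rw [hee, hμ']
    exact aux_orth ν A A' hA B B'
  have htot : ∀ f : Lp ℂ 2 μ, (∀ i a, inner ℂ (e i a) f = 0) → f = 0 := by
    intro f hf
    refine aux_tot ν μ f fun A B => ?_
    rw [← he]; exact hf A B
  have hSe : ∀ x A B, S x (e A B) =
      e (A.map (Equiv.subRight x).toEmbedding) (fun y => B (y + x)) := by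
    intro x A B
    rw [hS]
    change Lp.compMeasurePreserving (σ x) (hmp x) ((auxgen_memLp ν μ A B).toLp _) =
      (auxgen_memLp ν μ _ _).toLp _
    rw [Lp.toLp_compMeasurePreserving]
    congr 1
    funext ω
    simp [auxgen, hσ]
  choose U hU using fun k : Fin d → ℝ =>
    aux_diag e horth htot (auxphase k) (auxphase_norm k)
  have hext : ∀ T T' : Lp ℂ 2 μ →L[ℂ] Lp ℂ 2 μ, (∀ i a, T (e i a) = T' (e i a)) →
      ∀ f, T f = T' f := fun T T' h f => by rw [aux_ext e htot T T' h]
  let B0 : (Fin d → ℤ) → {s : Set ℝ // MeasurableSet s} := fun _ => ⟨∅, MeasurableSet.empty⟩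
  have hone : ∀ B, (e ∅ B : ((Fin d → ℤ) → ℝ) → ℂ) =ᵐ[μ] fun _ => 1 := by
    intro B
    filter_upwards [(auxgen_memLp ν μ ∅ B).coeFn_toLp] with ω hω
    rw [hω]; simp [auxgen]
  refine ⟨U, ?_, ?_, ?_, ?_, ?_⟩
  · ext1 f
    refine hext ((U 0).toContinuousLinearEquiv : Lp ℂ 2 μ →L[ℂ] Lp ℂ 2 μ)
      (ContinuousLinearMap.id ℂ _) ?_ f
    intro A B
    change U 0 (e A B) = e A B
    rw [hU, auxphase_zero, one_smul]
  · intro k k' f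
    refine hext ((U (k + k')).toContinuousLinearEquiv : Lp ℂ 2 μ →L[ℂ] Lp ℂ 2 μ)
      (((U k).toContinuousLinearEquiv : Lp ℂ 2 μ →L[ℂ] Lp ℂ 2 μ).comp
        ((U k').toContinuousLinearEquiv : Lp ℂ 2 μ →L[ℂ] Lp ℂ 2 μ)) ?_ f
    intro A B
    change U (k + k') (e A B) = U k (U k' (e A B))
    rw [hU, hU, map_smul, hU, smul_smul, auxphase_add, mul_comm]
  · intro f
    refine aux_cont e htot U ?_ f
    intro A B
    simp_rw [hU]
    exact (auxphase_cont A).smul continuous_const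
  · intro k one h1
    have : one = e ∅ B0 := Lp.ext (h1.trans (hone B0).symm)
    rw [this, hU, auxphase_empty, one_smul]
  · intro k x f hf
    have hf0 : inner ℂ (e ∅ B0) f = 0 := by
      rw [he]; simpa [auxgen] using hf
    set c := Complex.exp (Complex.I * (∑ j, k j * (x j : ℝ) : ℝ)) with hc
    let P : Lp ℂ 2 μ →L[ℂ] Lp ℂ 2 μ :=
      ContinuousLinearMap.id ℂ _ - (innerSL ℂ (e ∅ B0)).smulRight (e ∅ B0)
    have hP : ∀ g, P g = g - inner ℂ (e ∅ B0) g • e ∅ B0 := fun g => rfl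
    have hPf : P f = f := by rw [hP, hf0, zero_smul, sub_zero]
    have key := hext
      ((((U k).toContinuousLinearEquiv : Lp ℂ 2 μ →L[ℂ] Lp ℂ 2 μ).comp
        ((S x).toContinuousLinearEquiv : Lp ℂ 2 μ →L[ℂ] Lp ℂ 2 μ)).comp P)
      (c • (((S x).toContinuousLinearEquiv : Lp ℂ 2 μ →L[ℂ] Lp ℂ 2 μ).comp
        ((U k).toContinuousLinearEquiv : Lp ℂ 2 μ →L[ℂ] Lp ℂ 2 μ)).comp P) ?_ f
    · change U k (S x (P f)) = c • S x (U k (P f)) at key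
      rwa [hPf] at key
    · intro A B
      change U k (S x (P (e A B))) = c • S x (U k (P (e A B)))
      by_cases hA : A = ∅
      · have h0 : P (e A B) = 0 := by
          subst hA
          have h1 : e ∅ B = e ∅ B0 := Lp.ext ((hone B).trans (hone B0).symm)
          rw [h1, hP, hee]
          simp [auxgen]
        rw [h0]; simp
      · rw [hP, horth ∅ A (Ne.symm hA), zero_smul, sub_zero, hSe, hU, hU, map_smul, hSe,
          auxphase_shift k x A hA, smul_smul]
end

section
/- Let (S, μ) be a probability space equipped with μ-measure-preserving measurable maps σ_x : S → S for x ∈ ℤᵈ satisfying σ_0 = id and σ_x ∘ σ_y = σ_{x+y}. Let F : S × ℤᵈ × ℤᵈ → ℂ be measurable in its first argument with ‖F‖_{W¹} := sup_{x∈ℤᵈ} Σ_{ζ∈ℤᵈ} ∫_S |F(s, x+ζ, ζ)| dμ(s) < ∞ and with Σ_{x,y∈ℤᵈ} ∫_S |F(s, x, y)|² dμ(s) < ∞, and for k ∈ ℝᵈ define F̂_k(s, x) := Σ_{ζ∈ℤᵈ} e^{i k·ζ} F(σ_ζ s, x−ζ, −ζ). Then (Plancherel identity) Σ_{x∈ℤᵈ}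 (2π)^{−d} ∫_{[0,2π]^d} ∫_S |F̂_k(s, x)|² dμ(s) dk = Σ_{x,y∈ℤᵈ} ∫_S |F(s, x, y)|² dμ(s). -/
open MeasureTheory ENNReal

/-- The augmented-space norm `‖F‖_{W¹} = sup_x Σ_ζ ∫ |F(s, x+ζ, ζ)| dμ(s)`
(as an extended nonnegative real). -/
noncomputable def W1norm {S : Type*} [MeasurableSpace S] (μ : Measure S) {d : ℕ}
    (F : S → (Fin d → ℤ) → (Fin d → ℤ) → ℂ) : ℝ≥0∞ :=
  ⨆ x : Fin d → ℤ, ∑' ζ : Fin d → ℤ, ∫⁻ s, (‖F s (x + ζ) ζ‖₊ : ℝ≥0∞) ∂μ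

/-- The Fourier transform `F̂_k(s,x) = Σ_ζ e^{ik·ζ} F(σ_ζ s, x−ζ, −ζ)`. -/
noncomputable def fourierW {S : Type*} {d : ℕ} (σ : (Fin d → ℤ) → S → S)
    (F : S → (Fin d → ℤ) → (Fin d → ℤ) → ℂ) (k : Fin d → ℝ) (s : S) (x : Fin d → ℤ) : ℂ :=
  ∑' ζ : Fin d → ℤ,
    Complex.exp (Complex.I * (∑ j, k j * (ζ j : ℝ) : ℝ)) * F (σ ζ s) (x - ζ) (-ζ)


/-- one-dimensional orthogonality -/
lemma aux_orth1 (n : ℤ) :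
    ∫ t : ℝ in Set.Icc (0 : ℝ) (2 * Real.pi), Complex.exp (Complex.I * ((t * (n : ℝ) : ℝ) : ℂ)) =
      if n = 0 then ((2 * Real.pi : ℝ) : ℂ) else 0 := by
  rw [integral_Icc_eq_integral_Ioc, ← intervalIntegral.integral_of_le (by positivity)]
  split_ifs with h
  · subst h; simp
  · have hc : Complex.I * (n : ℂ) ≠ 0 := by simp [h]
    have : ∀ t : ℝ, Complex.I * ((t * (n : ℝ) : ℝ) : ℂ) = (Complex.I * (n : ℂ)) * t := by
      intro t; push_cast; ring
    simp_rw [this]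
    rw [integral_exp_mul_complex hc]
    have h2 : Complex.exp (Complex.I * (n : ℂ) * ((2 * Real.pi : ℝ) : ℂ)) = 1 := by
      rw [Complex.exp_eq_one_iff]
      exact ⟨n, by push_cast; ring⟩
    rw [h2]; simp

lemma aux_orth_s12 {d : ℕ} (n : Fin d → ℤ) :
    ∫ k : Fin d → ℝ in Set.univ.pi fun _ => Set.Icc (0 : ℝ) (2 * Real.pi),
        Complex.exp (Complex.I * (∑ j, k j * (n j : ℝ) : ℝ)) =
      if n = 0 then (((2 * Real.pi) ^ d : ℝ) : ℂ) else 0 := by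
  have h1 : ∀ k : Fin d → ℝ, Complex.exp (Complex.I * (∑ j, k j * (n j : ℝ) : ℝ)) =
      ∏ j, Complex.exp (Complex.I * ((k j * (n j : ℝ) : ℝ) : ℂ)) := by
    intro k
    rw [← Complex.exp_sum, Complex.ofReal_sum, Finset.mul_sum]
  simp_rw [h1]
  rw [volume_pi, Measure.restrict_pi_pi]
  rw [integral_fintype_prod_eq_prod
    (fun j (t : ℝ) => Complex.exp (Complex.I * ((t * (n j : ℝ) : ℝ) : ℂ)))]
  simp_rw [aux_orth1]
  split_ifs with h
  · subst h; simp
  · obtain ⟨j, hj⟩ := Function.ne_iff.mp h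
    exact Finset.prod_eq_zero (Finset.mem_univ j) (by simpa using hj)

lemma aux_norm {d : ℕ} (n : Fin d → ℤ) (k : Fin d → ℝ) :
    ‖Complex.exp (Complex.I * (∑ j, k j * (n j : ℝ) : ℝ))‖ = 1 := by
  rw [mul_comm]; exact Complex.norm_exp_ofReal_mul_I _

lemma aux_cont_s12 {d : ℕ} (n : Fin d → ℤ) :
    Continuous fun k : Fin d → ℝ => Complex.exp (Complex.I * (∑ j, k j * (n j : ℝ) : ℝ)) := by
  fun_prop

lemma aux_conj {d : ℕ} (m n : Fin d → ℤ) (k : Fin d → ℝ) :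
    Complex.exp (Complex.I * (∑ j, k j * (m j : ℝ) : ℝ)) *
      (starRingEnd ℂ) (Complex.exp (Complex.I * (∑ j, k j * (n j : ℝ) : ℝ))) =
    Complex.exp (Complex.I * (∑ j, k j * ((m - n) j : ℝ) : ℝ)) := by
  rw [← Complex.exp_conj, ← Complex.exp_add]
  congr 1
  simp only [map_mul, Complex.conj_I, Complex.conj_ofReal, Pi.sub_apply, Int.cast_sub, mul_sub,
    Finset.sum_sub_distrib]
  push_cast
  ring

set_option maxHeartbeats 1600000 in
/-- Pointwise Parseval for an absolutely summable sequence. -/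
lemma aux_parseval {d : ℕ} (a : (Fin d → ℤ) → ℂ) (ha : Summable fun ζ => ‖a ζ‖) :
    ∫⁻ k : Fin d → ℝ in Set.univ.pi fun _ => Set.Icc (0 : ℝ) (2 * Real.pi),
      (‖∑' ζ : Fin d → ℤ,
        Complex.exp (Complex.I * (∑ j, k j * (ζ j : ℝ) : ℝ)) * a ζ‖₊ : ℝ≥0∞) ^ 2 =
    ENNReal.ofReal ((2 * Real.pi) ^ d) * ∑' ζ, (‖a ζ‖₊ : ℝ≥0∞) ^ 2 := by
  set ν : Measure (Fin d → ℝ) :=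
    volume.restrict (Set.univ.pi fun _ => Set.Icc (0 : ℝ) (2 * Real.pi)) with hν
  have hfin : IsFiniteMeasure ν := by
    refine ⟨?_⟩
    rw [hν, Measure.restrict_apply_univ]
    exact (isCompact_univ_pi fun _ => isCompact_Icc).measure_lt_top
  set f : (Fin d → ℝ) → ℂ := fun k => ∑' ζ : Fin d → ℤ,
        Complex.exp (Complex.I * (∑ j, k j * (ζ j : ℝ) : ℝ)) * a ζ with hf
  have hnorm : ∀ k : Fin d → ℝ, ∀ ζ : Fin d → ℤ,
      ‖Complex.exp (Complex.I * (∑ j, k j * (ζ j : ℝ) : ℝ)) * a ζ‖ = ‖a ζ‖ := by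
    intro k ζ; rw [norm_mul, aux_norm, one_mul]
  have hsum : ∀ k : Fin d → ℝ, Summable fun ζ : Fin d → ℤ =>
      ‖Complex.exp (Complex.I * (∑ j, k j * (ζ j : ℝ) : ℝ)) * a ζ‖ := by
    intro k; simpa only [hnorm] using ha
  have hcont : Continuous f :=
    continuous_tsum (fun ζ => (aux_cont_s12 ζ).mul continuous_const) ha (fun ζ k => (hnorm k ζ).le)
  have hbd : ∀ k, ‖f k‖ ≤ ∑' ζ, ‖a ζ‖ := by
    intro k
    refine (norm_tsum_le_tsum_norm (hsum k)).trans ?_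
    simp only [hnorm]; exact le_rfl
  have hint : Integrable (fun k => ‖f k‖ ^ 2) ν := by
    refine Integrable.of_bound (C := (∑' ζ, ‖a ζ‖) ^ 2)
      (hcont.norm.pow 2).aestronglyMeasurable (Filter.Eventually.of_forall fun k => ?_)
    rw [Real.norm_of_nonneg (by positivity)]
    exact pow_le_pow_left₀ (norm_nonneg _) (hbd k) 2
  -- squares summable
  have hsq : Summable fun p : (Fin d → ℤ) × (Fin d → ℤ) => ‖a p.1‖ * ‖a p.2‖ :=
    ha.mul_of_nonneg ha (fun _ => norm_nonneg _) (fun _ => norm_nonneg _)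
  have hsq1 : Summable fun ζ => ‖a ζ‖ ^ 2 := by
    have := hsq.comp_injective (i := fun ζ : Fin d → ℤ => (ζ, ζ))
      (fun x y h => (Prod.mk.inj h).1)
    simpa [Function.comp_def, sq] using this
  have hexp : ∀ k, ((‖f k‖ ^ 2 : ℝ) : ℂ) = ∑' p : (Fin d → ℤ) × (Fin d → ℤ),
      a p.1 * (starRingEnd ℂ) (a p.2) *
        Complex.exp (Complex.I * (∑ j, k j * ((p.1 - p.2) j : ℝ) : ℝ)) := by
    intro k
    have h1 : ((‖f k‖ ^ 2 : ℝ) : ℂ) = f k * (starRingEnd ℂ) (f k) := by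
      rw [Complex.mul_conj, Complex.normSq_eq_norm_sq]
    have h2 : (starRingEnd ℂ) (f k) = ∑' ζ : Fin d → ℤ, (starRingEnd ℂ)
        (Complex.exp (Complex.I * (∑ j, k j * (ζ j : ℝ) : ℝ)) * a ζ) :=
      Complex.conj_tsum _
    rw [h1, h2, hf, tsum_mul_tsum_of_summable_norm (hsum k)
      (by simpa only [RCLike.norm_conj] using hsum k)]
    refine tsum_congr fun p => ?_
    rw [← aux_conj, map_mul]
    ring
  have key : ((∫ k, ‖f k‖ ^ 2 ∂ν : ℝ) : ℂ) =
      (((2 * Real.pi) ^ d * ∑' ζ, ‖a ζ‖ ^ 2 : ℝ) : ℂ) := by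
    rw [← integral_complex_ofReal]
    simp_rw [hexp]
    have hn : ∀ (p : (Fin d → ℤ) × (Fin d → ℤ)) (k : Fin d → ℝ),
      ‖a p.1 * (starRingEnd ℂ) (a p.2) *
        Complex.exp (Complex.I * (∑ j, k j * ((p.1 - p.2) j : ℝ) : ℝ))‖ = ‖a p.1‖ * ‖a p.2‖ := by
      intro p k
      rw [norm_mul, aux_norm, mul_one, norm_mul, RCLike.norm_conj]
    rw [← integral_tsum_of_summable_integral_norm]
    · have : ∀ p : (Fin d → ℤ) × (Fin d → ℤ), ∫ k, a p.1 * (starRingEnd ℂ) (a p.2) *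
        Complex.exp (Complex.I * (∑ j, k j * ((p.1 - p.2) j : ℝ) : ℝ)) ∂ν =
          if p.2 = p.1 then (((2 * Real.pi) ^ d : ℝ) : ℂ) * ((‖a p.1‖ ^ 2 : ℝ) : ℂ) else 0 := by
        rintro ⟨p, q⟩
        rw [integral_const_mul, aux_orth_s12]
        by_cases h : q = p
        · subst h
          simp only [sub_self, if_true]
          rw [Complex.mul_conj, Complex.normSq_eq_norm_sq, mul_comm]
        · have : p - q ≠ 0 := fun h' => h (sub_eq_zero.mp h').symm
          simp [h, this]
      simp_rw [this]
      rw [Summable.tsum_prod']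
      · simp only [tsum_ite_eq]
        rw [tsum_mul_left, ← Complex.ofReal_tsum, Complex.ofReal_mul]
      · refine Summable.of_norm_bounded (hsq.mul_left (‖(((2 * Real.pi) ^ d : ℝ) : ℂ)‖)) ?_
        rintro ⟨p, q⟩
        dsimp only
        split_ifs with h
        · subst h
          rw [norm_mul, Complex.norm_real (‖a q‖ ^ 2), Real.norm_of_nonneg (by positivity), sq]
        · rw [norm_zero]; positivity
      · intro p
        refine summable_of_ne_finset_zero (s := {p}) fun q hq => ?_
        have hqp : q ≠ p := by simpa using hq
        exact if_neg hqp
    · intro p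
      refine Integrable.of_bound (C := ‖a p.1‖ * ‖a p.2‖)
        (continuous_const.mul (aux_cont_s12 _)).aestronglyMeasurable
        (Filter.Eventually.of_forall fun k => (hn p k).le)
    · simp_rw [hn, integral_const]
      simp only [smul_eq_mul]
      exact hsq.mul_left _
  have key' := Complex.ofReal_injective key
  have e1 : ∀ z : ℂ, (‖z‖₊ : ℝ≥0∞) ^ 2 = ENNReal.ofReal (‖z‖ ^ 2) := by
    intro z
    rw [ENNReal.ofReal_pow (norm_nonneg _), ofReal_norm_eq_enorm]; rfl
  simp_rw [e1]
  rw [← ofReal_integral_eq_lintegral_ofReal hint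
    (Filter.Eventually.of_forall fun k => by positivity), key',
    ENNReal.ofReal_mul (by positivity), ENNReal.ofReal_tsum_of_nonneg (fun _ => by positivity) hsq1]

/-- Plancherel identity. If `‖F‖_{W¹} < ∞` and `F` is square summable,
then `Σ_x (2π)^{−d} ∫_{[0,2π]^d} ∫_S |F̂_k(s,x)|² dμ dk = Σ_{x,y} ∫_S |F(s,x,y)|² dμ`. -/
theorem stmt_12 {S : Type*} [MeasurableSpace S] (μ : Measure S) [IsProbabilityMeasure μ]
    (d : ℕ) (hd : 1 ≤ d)
    (σ : (Fin d → ℤ) → S → S)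
    (hσ : ∀ x, MeasurePreserving (σ x) μ μ)
    (hσ0 : σ 0 = id)
    (hσadd : ∀ x y, σ x ∘ σ y = σ (x + y))
    (F : S → (Fin d → ℤ) → (Fin d → ℤ) → ℂ)
    (hFmeas : ∀ x y, Measurable fun s => F s x y)
    (hF : W1norm μ F < ⊤)
    (hF2 : (∑' x : Fin d → ℤ, ∑' y : Fin d → ℤ,
        ∫⁻ s, (‖F s x y‖₊ : ℝ≥0∞) ^ 2 ∂μ) < ⊤) :
    ∑' x : Fin d → ℤ,
        (ENNReal.ofReal ((2 * Real.pi) ^ d))⁻¹ *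
          ∫⁻ k : Fin d → ℝ in Set.univ.pi fun _ => Set.Icc (0 : ℝ) (2 * Real.pi),
            ∫⁻ s, (‖fourierW σ F k s x‖₊ : ℝ≥0∞) ^ 2 ∂μ =
      ∑' x : Fin d → ℤ, ∑' y : Fin d → ℤ, ∫⁻ s, (‖F s x y‖₊ : ℝ≥0∞) ^ 2 ∂μ := by
  have step : ∀ x : Fin d → ℤ,
      (ENNReal.ofReal ((2 * Real.pi) ^ d))⁻¹ *
          ∫⁻ k : Fin d → ℝ in Set.univ.pi fun _ => Set.Icc (0 : ℝ) (2 * Real.pi),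
            ∫⁻ s, (‖fourierW σ F k s x‖₊ : ℝ≥0∞) ^ 2 ∂μ =
      ∑' y : Fin d → ℤ, ∫⁻ s, (‖F s (x + y) y‖₊ : ℝ≥0∞) ^ 2 ∂μ := by
    intro x
    have hm : ∀ ζ : Fin d → ℤ, Measurable fun s => F (σ ζ s) (x - ζ) (-ζ) := fun ζ =>
      (hFmeas _ _).comp (hσ ζ).measurable
    have hmeas : Measurable fun p : (Fin d → ℝ) × S => fourierW σ F p.1 p.2 x := by
      unfold fourierW
      refine Measurable.tsum fun ζ => ?_
      exact ((aux_cont_s12 ζ).measurable.comp measurable_fst).mul ((hm ζ).comp measurable_snd)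
    rw [lintegral_lintegral_swap
      (by exact ((measurable_coe_nnreal_ennreal.comp hmeas.nnnorm).pow_const 2).aemeasurable)]
    have hsum : ∀ᵐ s ∂μ, Summable fun ζ : Fin d → ℤ => ‖F (σ ζ s) (x - ζ) (-ζ)‖ := by
      have h1 : ∫⁻ s, ∑' ζ : Fin d → ℤ, (‖F (σ ζ s) (x - ζ) (-ζ)‖₊ : ℝ≥0∞) ∂μ ≠ ⊤ := by
        rw [lintegral_tsum (fun ζ => (hm ζ).nnnorm.coe_nnreal_ennreal.aemeasurable)]
        have h2 : ∀ ζ : Fin d → ℤ, ∫⁻ s, (‖F (σ ζ s) (x - ζ) (-ζ)‖₊ : ℝ≥0∞) ∂μ =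
            ∫⁻ s, (‖F s (x + (-ζ)) (-ζ)‖₊ : ℝ≥0∞) ∂μ := by
          intro ζ
          rw [← sub_eq_add_neg]
          exact (hσ ζ).lintegral_comp (hFmeas (x - ζ) (-ζ)).nnnorm.coe_nnreal_ennreal
        simp_rw [h2]
        have h3 := (Equiv.neg (Fin d → ℤ)).tsum_eq
          (fun ζ => ∫⁻ s, (‖F s (x + ζ) ζ‖₊ : ℝ≥0∞) ∂μ)
        simp only [Equiv.neg_apply] at h3
        rw [h3]
        exact ((le_iSup (fun x : Fin d → ℤ => ∑' ζ : Fin d → ℤ,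
          ∫⁻ s, (‖F s (x + ζ) ζ‖₊ : ℝ≥0∞) ∂μ) x).trans_lt hF).ne
      have h4 := ae_lt_top' (AEMeasurable.tsum
        (fun ζ => (hm ζ).nnnorm.coe_nnreal_ennreal.aemeasurable)) h1
      filter_upwards [h4] with s hs
      have := ENNReal.tsum_coe_ne_top_iff_summable.mp hs.ne
      exact NNReal.summable_coe.mpr this
    have hpars : ∀ᵐ s ∂μ,
        ∫⁻ k : Fin d → ℝ in Set.univ.pi fun _ => Set.Icc (0 : ℝ) (2 * Real.pi),
            (‖fourierW σ F k s x‖₊ : ℝ≥0∞) ^ 2 =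
        ENNReal.ofReal ((2 * Real.pi) ^ d) *
          ∑' ζ : Fin d → ℤ, (‖F (σ ζ s) (x - ζ) (-ζ)‖₊ : ℝ≥0∞) ^ 2 := by
      filter_upwards [hsum] with s hs
      exact aux_parseval _ hs
    rw [lintegral_congr_ae hpars, lintegral_const_mul' _ _ ENNReal.ofReal_ne_top, ← mul_assoc,
      ENNReal.inv_mul_cancel (by simp; positivity) ENNReal.ofReal_ne_top, one_mul,
      lintegral_tsum (fun ζ => ((hm ζ).nnnorm.coe_nnreal_ennreal.pow_const 2).aemeasurable)]
    have h2 : ∀ ζ : Fin d → ℤ, ∫⁻ s, (‖F (σ ζ s) (x - ζ) (-ζ)‖₊ : ℝ≥0∞) ^ 2 ∂μ =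
        ∫⁻ s, (‖F s (x + (-ζ)) (-ζ)‖₊ : ℝ≥0∞) ^ 2 ∂μ := by
      intro ζ
      rw [← sub_eq_add_neg]
      exact (hσ ζ).lintegral_comp ((hFmeas (x - ζ) (-ζ)).nnnorm.coe_nnreal_ennreal.pow_const 2)
    simp_rw [h2]
    exact (Equiv.neg (Fin d → ℤ)).tsum_eq
      (fun ζ => ∫⁻ s, (‖F s (x + ζ) ζ‖₊ : ℝ≥0∞) ^ 2 ∂μ)
  simp_rw [step]
  rw [ENNReal.tsum_comm]
  conv_rhs => rw [ENNReal.tsum_comm]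
  refine tsum_congr fun y => ?_
  exact (Equiv.addRight y).tsum_eq (fun x => ∫⁻ s, (‖F s x y‖₊ : ℝ≥0∞) ^ 2 ∂μ)
end
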